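/- Let d ≥ 2, let A : ℝ^d → ℝ^d be smooth and set B_{jk} := ∂_j A_k − ∂_k A_j. For R > 0 define μ(R) as the infimum, over all smooth g : ℝ^d → ℂ not identically zero on the open ball D_R, of (∫_{D_R} |∇g(x) − iA(x)g(x)|² |x|^{−(d−2)} dx) / (∫_{D_R} |g(x)|² |x|^{−(d−2)} dx). Then μ(R) = 0 for every R > 0 if and only if B is identically zero on ℝ^d. -/

import Mathlib

open MeasureTheory Real

/-- The magnetic energy density `|∇g(x) − iA(x)g(x)|²`. -/
noncomputable def magEnergy (d : ℕ)
    (A : EuclideanSpace ℝ (Fin d) → EuclideanSpace ℝ (Fin d))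
    (g : EuclideanSpace ℝ (Fin d) → ℂ) (x : EuclideanSpace ℝ (Fin d)) : ℝ :=
  ∑ j, ‖fderiv ℝ g x (EuclideanSpace.single j (1:ℝ)) - Complex.I * (A x j : ℝ) * g x‖ ^ 2

/-- The lowest magnetic Neumann-type Rayleigh quotient on the ball of radius `R`
with weight `|x|^{-(d-2)}`. -/
noncomputable def muB (d : ℕ)
    (A : EuclideanSpace ℝ (Fin d) → EuclideanSpace ℝ (Fin d)) (R : ℝ) : ℝ :=
  sInf {q : ℝ | ∃ g : EuclideanSpace ℝ (Fin d) → ℂ, ContDiff ℝ (⊤ : ℕ∞) g ∧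
    (∃ x ∈ Metric.ball (0 : EuclideanSpace ℝ (Fin d)) R, g x ≠ 0) ∧
    q = (∫ x in Metric.ball (0 : EuclideanSpace ℝ (Fin d)) R,
          magEnergy d A g x * ‖x‖ ^ (-((d:ℝ) - 2)))
        / ∫ x in Metric.ball (0 : EuclideanSpace ℝ (Fin d)) R,
            ‖g x‖^2 * ‖x‖ ^ (-((d:ℝ) - 2))}


section

variable {d : ℕ} {A : EuclideanSpace ℝ (Fin d) → EuclideanSpace ℝ (Fin d)}
  {g : EuclideanSpace ℝ (Fin d) → ℂ}

/-- The component `∂ⱼg − iAⱼg` of the magnetic gradient. -/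
noncomputable def magDeriv (A : EuclideanSpace ℝ (Fin d) → EuclideanSpace ℝ (Fin d))
    (g : EuclideanSpace ℝ (Fin d) → ℂ) (j : Fin d) (x : EuclideanSpace ℝ (Fin d)) : ℂ :=
  fderiv ℝ g x (EuclideanSpace.single j (1:ℝ)) - Complex.I * (A x j : ℝ) * g x

/-- The component `∂ⱼAₖ − ∂ₖAⱼ` of the magnetic tensor. -/
noncomputable def magTensor (A : EuclideanSpace ℝ (Fin d) → EuclideanSpace ℝ (Fin d))
    (j k : Fin d) (x : EuclideanSpace ℝ (Fin d)) : ℝ :=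
  fderiv ℝ (fun y => A y k) x (EuclideanSpace.single j (1:ℝ))
    - fderiv ℝ (fun y => A y j) x (EuclideanSpace.single k (1:ℝ))

lemma magEnergy_eq_sum (x : EuclideanSpace ℝ (Fin d)) :
    magEnergy d A g x = ∑ j, ‖magDeriv A g j x‖ ^ 2 := rfl

lemma magEnergy_nonneg (x : EuclideanSpace ℝ (Fin d)) : 0 ≤ magEnergy d A g x :=
  Finset.sum_nonneg fun _ _ => by positivity

lemma norm_sq_magDeriv_le (j : Fin d) (x : EuclideanSpace ℝ (Fin d)) :
    ‖magDeriv A g j x‖ ^ 2 ≤ magEnergy d A g x :=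
  Finset.single_le_sum (f := fun j => ‖magDeriv A g j x‖ ^ 2)
    (fun _ _ => by positivity) (Finset.mem_univ j)

lemma continuous_magDeriv (hA : ContDiff ℝ (⊤ : ℕ∞) A) (hg : ContDiff ℝ (⊤ : ℕ∞) g) (j : Fin d) :
    Continuous (magDeriv A g j) := by
  have h1 := hg.continuous_fderiv (by simp)
  have h2 := hA.continuous
  have h3 := hg.continuous
  unfold magDeriv
  fun_prop

lemma continuous_magEnergy (hA : ContDiff ℝ (⊤ : ℕ∞) A) (hg : ContDiff ℝ (⊤ : ℕ∞) g) :
    Continuous (magEnergy d A g) := by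
  have h := continuous_magDeriv hA hg
  have : magEnergy d A g = fun x => ∑ j, ‖magDeriv A g j x‖ ^ 2 := rfl
  rw [this]
  fun_prop

lemma continuous_magTensor (hA : ContDiff ℝ (⊤ : ℕ∞) A) (j k : Fin d) :
    Continuous (magTensor A j k) := by
  have h : ∀ l, Continuous fun x => fderiv ℝ (fun y => A y l) x := fun l =>
    ((EuclideanSpace.proj (𝕜 := ℝ) l).contDiff.comp hA).continuous_fderiv (by simp)
  exact ((h k).clm_apply continuous_const).sub ((h j).clm_apply continuous_const)

lemma fderiv_coord (hA : ContDiff ℝ (⊤ : ℕ∞) A) (x v : EuclideanSpace ℝ (Fin d)) (k : Fin d) :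
    fderiv ℝ (fun y => A y k) x v = fderiv ℝ A x v k := by
  have h : HasFDerivAt A (fderiv ℝ A x) x :=
    (hA.differentiable (by simp)).differentiableAt.hasFDerivAt
  have h2 := (EuclideanSpace.proj (𝕜 := ℝ) k).hasFDerivAt.comp x h
  have h3 : fderiv ℝ (fun y => A y k) x = (EuclideanSpace.proj (𝕜 := ℝ) k).comp (fderiv ℝ A x) :=
    h2.fderiv
  rw [h3]
  rfl

/-- A vector potential generating no magnetic field is a gradient. -/
lemma exists_hasFDerivAt_of_magTensor_eq_zero (hA : ContDiff ℝ (⊤ : ℕ∞) A)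
    (hB : ∀ x j k, magTensor A j k x = 0) :
    ∃ φ : EuclideanSpace ℝ (Fin d) → ℝ, ∀ x, HasFDerivAt φ (innerSL ℝ (A x)) x := by
  have hA' : ∀ x, HasFDerivAt A (fderiv ℝ A x) x := fun x =>
    (hA.differentiable (by simp)).differentiableAt.hasFDerivAt
  have hω : ∀ x, HasFDerivAt (fun y => innerSL ℝ (A y)) ((innerSL ℝ).comp (fderiv ℝ A x)) x :=
    fun x => ((innerSL ℝ (E := EuclideanSpace ℝ (Fin d))).hasFDerivAt).comp x (hA' x)
  obtain ⟨φ, hφ⟩ := convex_univ.exists_forall_hasFDerivAt_of_fderiv_symmetric isOpen_univ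
    (ω := fun y => innerSL ℝ (A y)) (fun x _ => (hω x).differentiableAt.differentiableWithinAt)
    (by
      intro a _ x y
      rw [(hω a).fderiv]
      change inner ℝ (fderiv ℝ A a x) y = inner ℝ (fderiv ℝ A a y) x
      have key : (innerₗ _).comp (fderiv ℝ A a).toLinearMap
          = ((innerₗ _).comp (fderiv ℝ A a).toLinearMap).flip := by
        refine LinearMap.BilinForm.ext_basis (EuclideanSpace.basisFun (Fin d) ℝ).toBasis
          fun j k => ?_
        have h := hB a j k
        rw [magTensor, fderiv_coord hA, fderiv_coord hA] at h
        simpa [EuclideanSpace.inner_single_right] using sub_eq_zero.1 h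
      exact congrArg (fun L => L x y) key)
  exact ⟨φ, fun x => hφ x trivial⟩

/-- Along a primitive of the vector potential, the phase `exp (iφ)` has zero magnetic energy. -/
lemma exists_ne_zero_magEnergy_eq_zero (hA : ContDiff ℝ (⊤ : ℕ∞) A)
    (hB : ∀ x j k, magTensor A j k x = 0) :
    ∃ g : EuclideanSpace ℝ (Fin d) → ℂ, ContDiff ℝ (⊤ : ℕ∞) g ∧ (∀ x, g x ≠ 0) ∧
      ∀ x, magEnergy d A g x = 0 := by
  obtain ⟨φ, hφ⟩ := exists_hasFDerivAt_of_magTensor_eq_zero hA hB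
  have hφs : ContDiff ℝ (⊤ : ℕ∞) φ := by
    rw [contDiff_infty_iff_fderiv]
    refine ⟨fun x => (hφ x).differentiableAt, ?_⟩
    rw [show fderiv ℝ φ = fun x => innerSL ℝ (A x) from funext fun x => (hφ x).fderiv]
    exact (innerSL ℝ).contDiff.comp hA
  refine ⟨fun x => Complex.exp (Complex.I * (φ x : ℝ)), ?_, fun x => Complex.exp_ne_zero _, ?_⟩
  · exact (contDiff_const.mul (Complex.ofRealCLM.contDiff.comp hφs)).cexp
  · intro x
    rw [magEnergy_eq_sum]
    refine Finset.sum_eq_zero fun j _ => ?_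
    have h1 : HasFDerivAt (fun x => Complex.exp (Complex.I * (φ x : ℝ))) _ x :=
      ((Complex.ofRealCLM.hasFDerivAt.comp x (hφ x)).const_mul Complex.I).cexp
    rw [magDeriv, h1.fderiv]
    simp [EuclideanSpace.inner_single_right]
    ring

/-- Comparison along a segment; the vector potential only rotates the phase. -/
lemma norm_sq_le_add_integral_magEnergy (hA : ContDiff ℝ (⊤ : ℕ∞) A)
    (hg : ContDiff ℝ (⊤ : ℕ∞) g) (x v : EuclideanSpace ℝ (Fin d)) :
    ‖g x‖ ^ 2 ≤ 3 * ‖g (x + v)‖ ^ 2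
      + 3 * ‖v‖ ^ 2 * ∫ t in (0:ℝ)..1, magEnergy d A g (x + t • v) := by
  have hdir : ∀ y, -(2 * inner ℝ (g y) (fderiv ℝ g y v))
      ≤ ‖g y‖ ^ 2 + ‖v‖ ^ 2 * magEnergy d A g y := by
    intro y
    have hv : fderiv ℝ g y v = ∑ j, (v j : ℂ) * magDeriv A g j y
        + Complex.I * ((∑ j, v j * A y j : ℝ) : ℂ) * g y := by
      conv_lhs => rw [← (EuclideanSpace.basisFun (Fin d) ℝ).sum_repr v]
      simp only [map_sum, map_smul, EuclideanSpace.basisFun_repr, EuclideanSpace.basisFun_apply,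
        Complex.ofReal_sum, Finset.mul_sum, Finset.sum_mul, ← Finset.sum_add_distrib]
      refine Finset.sum_congr rfl fun j _ => ?_
      simp [magDeriv]
      ring
    have h0 : inner ℝ (g y) (Complex.I * ((∑ j, v j * A y j : ℝ) : ℂ) * g y) = 0 := by
      simp only [Complex.inner, Complex.mul_re, Complex.mul_im, Complex.I_re, Complex.I_im,
        Complex.ofReal_re, Complex.ofReal_im, Complex.conj_re, Complex.conj_im]
      ring
    set S := ∑ j, (v j : ℂ) * magDeriv A g j y with hS
    have hSn : ‖S‖ ^ 2 ≤ ‖v‖ ^ 2 * magEnergy d A g y := by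
      have h1 : ‖S‖ ≤ ∑ j, ‖v j‖ * ‖magDeriv A g j y‖ := by
        refine (norm_sum_le _ _).trans (le_of_eq ?_)
        simp
      calc ‖S‖ ^ 2 ≤ (∑ j, ‖v j‖ * ‖magDeriv A g j y‖) ^ 2 := by gcongr
        _ ≤ (∑ j, ‖v j‖ ^ 2) * ∑ j, ‖magDeriv A g j y‖ ^ 2 :=
          Finset.sum_mul_sq_le_sq_mul_sq _ _ _
        _ = _ := by rw [EuclideanSpace.norm_sq_eq, magEnergy_eq_sum]
    rw [hv, inner_add_right, h0, add_zero]
    have h2 := neg_le_of_abs_le (abs_real_inner_le_norm (g y) S)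
    nlinarith [sq_nonneg (‖g y‖ - ‖S‖)]
  have hgc := hg.continuous
  have hEc := continuous_magEnergy hA hg
  have hder : ∀ t : ℝ, HasDerivAt (fun t : ℝ => Real.exp t * ‖g (x + t • v)‖ ^ 2)
      (Real.exp t * ‖g (x + t • v)‖ ^ 2
        + Real.exp t * (2 * inner ℝ (g (x + t • v)) (fderiv ℝ g (x + t • v) v))) t := by
    intro t
    have h1 : HasDerivAt (fun t : ℝ => x + t • v) v t := by
      simpa using ((hasDerivAt_id t).smul_const v).const_add x
    have h2 := ((hg.differentiable (by simp)).differentiableAt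
      (x := x + t • v)).hasFDerivAt.comp_hasDerivAt t h1
    exact (Real.hasDerivAt_exp t).mul h2.norm_sq
  have hint_int : Continuous fun t : ℝ =>
      -(Real.exp 1 * (‖v‖ ^ 2 * magEnergy d A g (x + t • v))) := by fun_prop
  have hmain := intervalIntegral.integral_le_sub_of_hasDeriv_right_of_le (a := 0) (b := 1)
    zero_le_one (g := fun t : ℝ => Real.exp t * ‖g (x + t • v)‖ ^ 2)
    (φ := fun t : ℝ => -(Real.exp 1 * (‖v‖ ^ 2 * magEnergy d A g (x + t • v))))
    (fun t _ => (hder t).continuousAt.continuousWithinAt)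
    (fun t _ => (hder t).hasDerivWithinAt) hint_int.integrableOn_Icc
    (by
      intro t ht
      have h1 := hdir (x + t • v)
      have h2 : Real.exp t ≤ Real.exp 1 := Real.exp_le_exp.2 ht.2.le
      have h3 := mul_le_mul_of_nonneg_left h1 (Real.exp_pos t).le
      have h4 : 0 ≤ ‖v‖ ^ 2 * magEnergy d A g (x + t • v) :=
        mul_nonneg (by positivity) (magEnergy_nonneg _)
      nlinarith [mul_le_mul_of_nonneg_right h2 h4])
  simp only [intervalIntegral.integral_neg, intervalIntegral.integral_const_mul, zero_smul,
    add_zero, Real.exp_zero, one_mul, one_smul] at hmain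
  have he : Real.exp 1 ≤ 3 := Real.exp_one_lt_three.le
  have hI : 0 ≤ ∫ t in (0:ℝ)..1, magEnergy d A g (x + t • v) :=
    intervalIntegral.integral_nonneg zero_le_one fun t _ => magEnergy_nonneg _
  nlinarith [mul_le_mul_of_nonneg_right he (sq_nonneg ‖g (x + v)‖),
    mul_le_mul_of_nonneg_right he (mul_nonneg (sq_nonneg ‖v‖) hI)]

/-- Change of variables under a homothety, on a set mapped into another one. -/
lemma setLIntegral_comp_homothety_le {s : ℝ} (hs : 0 < s) (c : EuclideanSpace ℝ (Fin d))
    {S S' : Set (EuclideanSpace ℝ (Fin d))} (hS : MeasurableSet S) (hS' : MeasurableSet S')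
    (hmaps : ∀ x ∈ S, c + s • (x - c) ∈ S')
    {F : EuclideanSpace ℝ (Fin d) → ENNReal} (hF : Measurable F) :
    ∫⁻ x in S, F (c + s • (x - c)) ≤ ENNReal.ofReal ((s ^ d)⁻¹) * ∫⁻ x in S', F x := by
  have hG : Measurable (S'.indicator F) := hF.indicator hS'
  have hmap : ∫⁻ x, S'.indicator F (c + s • (x - c))
      = ENNReal.ofReal ((s ^ d)⁻¹) * ∫⁻ x, S'.indicator F x := by
    have h1 : ∫⁻ x, S'.indicator F (c + s • (x - c)) = ∫⁻ x, S'.indicator F (c + s • x) :=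
      lintegral_sub_right_eq_self (fun x => S'.indicator F (c + s • x)) c
    have h2 : ∫⁻ x, S'.indicator F (c + s • x)
        = ∫⁻ x, S'.indicator F (c + x) ∂(Measure.map (s • ·) volume) := by
      rw [lintegral_map (f := fun x => S'.indicator F (c + x))
        (hG.comp (measurable_const_add c)) (measurable_const_smul s)]
    rw [h1, h2, Measure.map_addHaar_smul _ hs.ne', lintegral_smul_measure,
      lintegral_add_left_eq_self, finrank_euclideanSpace_fin, abs_of_pos (by positivity),
      smul_eq_mul]
  rw [← lintegral_indicator hS' F, ← hmap, ← lintegral_indicator hS]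
  refine lintegral_mono fun x => ?_
  by_cases hx : x ∈ S
  · simp [hx, hmaps x hx]
  · simp [hx]

/-- Change of variables under a dilation centred at the origin, with the weight `|x|^{-(d-2)}`. -/
lemma setLIntegral_comp_smul_weight_le {s r R : ℝ} (hs : 0 < s) (hr : s * r ≤ R)
    {F : EuclideanSpace ℝ (Fin d) → ENNReal} (hF : Measurable F) :
    ∫⁻ x in Metric.ball (0 : EuclideanSpace ℝ (Fin d)) r,
        F (s • x) * ENNReal.ofReal (‖x‖ ^ (-((d:ℝ) - 2)))
      ≤ ENNReal.ofReal ((s ^ 2)⁻¹) *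
        ∫⁻ x in Metric.ball (0 : EuclideanSpace ℝ (Fin d)) R,
          F x * ENNReal.ofReal (‖x‖ ^ (-((d:ℝ) - 2))) := by
  have hw : Measurable fun x : EuclideanSpace ℝ (Fin d) =>
      ENNReal.ofReal (‖x‖ ^ (-((d:ℝ) - 2))) := by fun_prop
  have h := setLIntegral_comp_homothety_le hs 0 (S := Metric.ball 0 r) (S' := Metric.ball 0 R)
    measurableSet_ball measurableSet_ball (by
      intro x hx
      rw [mem_ball_zero_iff] at hx
      rw [sub_zero, zero_add, mem_ball_zero_iff, norm_smul, Real.norm_of_nonneg hs.le]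
      exact (mul_lt_mul_of_pos_left hx hs).trans_le hr) (hF.mul hw)
  simp only [Pi.mul_apply, sub_zero, zero_add] at h
  have hpt : ∀ x : EuclideanSpace ℝ (Fin d), F (s • x) * ENNReal.ofReal (‖x‖ ^ (-((d:ℝ) - 2)))
      = ENNReal.ofReal (s ^ ((d:ℝ) - 2)) *
        (F (s • x) * ENNReal.ofReal (‖s • x‖ ^ (-((d:ℝ) - 2)))) := by
    intro x
    rw [norm_smul, Real.norm_of_nonneg hs.le, Real.mul_rpow hs.le (norm_nonneg x),
      mul_left_comm, ← ENNReal.ofReal_mul (by positivity), ← mul_assoc, ← Real.rpow_add hs]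
    simp
  simp_rw [hpt]
  rw [lintegral_const_mul' _ _ ENNReal.ofReal_ne_top]
  refine (mul_le_mul_right h _).trans (le_of_eq ?_)
  rw [← mul_assoc, ← ENNReal.ofReal_mul (by positivity)]
  congr 2
  rw [Real.rpow_sub hs, Real.rpow_natCast, Real.rpow_ofNat]
  field_simp

/-- Integrated comparison of `|g|²` with its values at the end of the segments
from `x` to `x + τ (x - c)`. -/
lemma lintegral_norm_sq_le_of_homothety (hA : ContDiff ℝ (⊤ : ℕ∞) A)
    (hg : ContDiff ℝ (⊤ : ℕ∞) g) {ν ν' : Measure (EuclideanSpace ℝ (Fin d))} [SFinite ν]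
    (c : EuclideanSpace ℝ (Fin d)) (τ V : ℝ) (K : ENNReal)
    (hV : ∀ᵐ x ∂ν, ‖τ • (x - c)‖ ^ 2 ≤ V)
    (hν : ∀ t ∈ Set.Icc (0:ℝ) 1, ∀ F : EuclideanSpace ℝ (Fin d) → ENNReal, Measurable F →
      ∫⁻ x, F (x + t • τ • (x - c)) ∂ν ≤ K * ∫⁻ x, F x ∂ν') :
    ∫⁻ x, ENNReal.ofReal (‖g x‖ ^ 2) ∂ν
      ≤ 3 * ∫⁻ x, ENNReal.ofReal (‖g (x + τ • (x - c))‖ ^ 2) ∂ν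
        + ENNReal.ofReal (3 * V) * K * ∫⁻ x, ENNReal.ofReal (magEnergy d A g x) ∂ν' := by
  have hgc := hg.continuous
  have hEc := continuous_magEnergy hA hg
  have hpt : ∀ᵐ x ∂ν, ENNReal.ofReal (‖g x‖ ^ 2)
      ≤ 3 * ENNReal.ofReal (‖g (x + τ • (x - c))‖ ^ 2)
        + ENNReal.ofReal (3 * V) * ∫⁻ t in Set.Ioc (0:ℝ) 1,
          ENNReal.ofReal (magEnergy d A g (x + t • τ • (x - c))) := by
    filter_upwards [hV] with x hx
    have h := norm_sq_le_add_integral_magEnergy hA hg x (τ • (x - c))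
    have hcont : Continuous fun t : ℝ => magEnergy d A g (x + t • τ • (x - c)) := by fun_prop
    rw [intervalIntegral.integral_of_le zero_le_one] at h
    have hI : 0 ≤ ∫ t in Set.Ioc (0:ℝ) 1, magEnergy d A g (x + t • τ • (x - c)) :=
      integral_nonneg fun t => magEnergy_nonneg _
    have hV0 : 0 ≤ V := (sq_nonneg _).trans hx
    rw [← ofReal_integral_eq_lintegral_ofReal
      (hcont.integrableOn_Icc.mono_set Set.Ioc_subset_Icc_self)
      (Filter.Eventually.of_forall fun t => magEnergy_nonneg _),
      ← ENNReal.ofReal_mul (by positivity),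
      show (3 : ENNReal) = ENNReal.ofReal 3 by simp, ← ENNReal.ofReal_mul (by positivity),
      ← ENNReal.ofReal_add (by positivity) (by positivity)]
    refine ENNReal.ofReal_le_ofReal (h.trans ?_)
    gcongr
  refine (lintegral_mono_ae hpt).trans ?_
  have hm1 : Measurable fun x => 3 * ENNReal.ofReal (‖g (x + τ • (x - c))‖ ^ 2) :=
    (ENNReal.continuous_ofReal.comp (by fun_prop)).measurable.const_mul 3
  rw [lintegral_add_left hm1, lintegral_const_mul' _ _ (by simp),
    lintegral_const_mul' _ _ ENNReal.ofReal_ne_top, mul_assoc]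
  gcongr
  have hm2 : Measurable (Function.uncurry fun (x : EuclideanSpace ℝ (Fin d)) (t : ℝ) =>
      ENNReal.ofReal (magEnergy d A g (x + t • τ • (x - c)))) :=
    (ENNReal.continuous_ofReal.comp (by fun_prop)).measurable
  rw [lintegral_lintegral_swap hm2.aemeasurable]
  calc _ ≤ ∫⁻ t in Set.Ioc (0:ℝ) 1, K * ∫⁻ x, ENNReal.ofReal (magEnergy d A g x) ∂ν' :=
        setLIntegral_mono' measurableSet_Ioc fun t ht =>
          hν t ⟨ht.1.le, ht.2⟩ (fun x => ENNReal.ofReal (magEnergy d A g x)) (by fun_prop)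
    _ = _ := by simp

/-- The weight `|x|^{-(d-2)}` is integrable on balls. -/
lemma integrableOn_norm_rpow_ball (hd : 2 ≤ d) (R : ℝ) :
    IntegrableOn (fun x : EuclideanSpace ℝ (Fin d) => ‖x‖ ^ (-((d:ℝ) - 2)))
      (Metric.ball 0 R) := by
  have : Nonempty (Fin d) := ⟨⟨0, by omega⟩⟩
  rw [integrableOn_fun_norm_addHaar volume (f := fun y : ℝ => y ^ (-((d:ℝ) - 2))),
    finrank_euclideanSpace_fin]
  have h : IntegrableOn (fun y : ℝ => y) (Set.Ioo 0 R) :=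
    continuous_id.integrableOn_Icc.mono_set Set.Ioo_subset_Icc_self
  refine h.congr_fun (fun y hy => ?_) measurableSet_Ioo
  change y = y ^ (d - 1) * y ^ (-((d:ℝ) - 2))
  rw [← Real.rpow_natCast, ← Real.rpow_add hy.1, Nat.cast_sub (by omega)]
  rw [show ((d:ℝ) - (1:ℕ) + -((d:ℝ) - 2)) = 1 by push_cast; ring, Real.rpow_one]

lemma integrableOn_mul_norm_rpow_ball (hd : 2 ≤ d) (R : ℝ) {f : EuclideanSpace ℝ (Fin d) → ℝ}
    (hf : Continuous f) :
    IntegrableOn (fun x => f x * ‖x‖ ^ (-((d:ℝ) - 2))) (Metric.ball 0 R) := by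
  obtain ⟨C, hC⟩ :=
    (isCompact_closedBall (0 : EuclideanSpace ℝ (Fin d)) R).exists_bound_of_continuousOn
    hf.continuousOn
  refine Integrable.bdd_mul (c := C) (integrableOn_norm_rpow_ball hd R)
    hf.aestronglyMeasurable ?_
  filter_upwards [ae_restrict_mem measurableSet_ball] with x hx
  exact hC x (Metric.ball_subset_closedBall hx)

lemma integrableOn_ball_of_continuous {f : EuclideanSpace ℝ (Fin d) → ℝ} (hf : Continuous f)
    (c : EuclideanSpace ℝ (Fin d)) (R : ℝ) : IntegrableOn f (Metric.ball c R) :=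
  (hf.continuousOn.integrableOn_compact (isCompact_closedBall c R)).mono_set
    Metric.ball_subset_closedBall

/-- The component `Im (conj g (∂ₖg − iAₖg))` of the probability current. -/
noncomputable def magCurrent (A : EuclideanSpace ℝ (Fin d) → EuclideanSpace ℝ (Fin d))
    (g : EuclideanSpace ℝ (Fin d) → ℂ) (k : Fin d) (x : EuclideanSpace ℝ (Fin d)) : ℝ :=
  (star (g x) * magDeriv A g k x).im

lemma abs_magCurrent_le (k : Fin d) (x : EuclideanSpace ℝ (Fin d)) :
    |magCurrent A g k x| ≤ ‖g x‖ * ‖magDeriv A g k x‖ := by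
  refine (Complex.abs_im_le_norm _).trans (le_of_eq ?_)
  rw [norm_mul, norm_star]

lemma contDiff_magDeriv (hA : ContDiff ℝ (⊤ : ℕ∞) A) (hg : ContDiff ℝ (⊤ : ℕ∞) g) (k : Fin d) :
    ContDiff ℝ (⊤ : ℕ∞) (magDeriv A g k) := by
  have h1 : ContDiff ℝ (⊤ : ℕ∞) (fderiv ℝ g) := (contDiff_infty_iff_fderiv.1 hg).2
  have h2 : ContDiff ℝ (⊤ : ℕ∞) fun x => ((A x k : ℝ) : ℂ) :=
    Complex.ofRealCLM.contDiff.comp ((EuclideanSpace.proj (𝕜 := ℝ) k).contDiff.comp hA)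
  exact (h1.clm_apply contDiff_const).sub ((contDiff_const.mul h2).mul hg)

lemma contDiff_magCurrent (hA : ContDiff ℝ (⊤ : ℕ∞) A) (hg : ContDiff ℝ (⊤ : ℕ∞) g) (k : Fin d) :
    ContDiff ℝ (⊤ : ℕ∞) (magCurrent A g k) :=
  Complex.imCLM.contDiff.comp
    ((Complex.conjCLE.contDiff.comp hg).mul (contDiff_magDeriv hA hg k))

lemma fderiv_magCurrent (hA : ContDiff ℝ (⊤ : ℕ∞) A) (hg : ContDiff ℝ (⊤ : ℕ∞) g) (k : Fin d)
    (x v : EuclideanSpace ℝ (Fin d)) :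
    fderiv ℝ (magCurrent A g k) x v
      = (star (fderiv ℝ g x v) * magDeriv A g k x
        + star (g x) * (fderiv ℝ (fderiv ℝ g) x v (EuclideanSpace.single k (1:ℝ))
          - (Complex.I * (fderiv ℝ (fun y => A y k) x v : ℝ) * g x
            + Complex.I * (A x k : ℝ) * fderiv ℝ g x v))).im := by
  have hline : ∀ {F : Type} [NormedAddCommGroup F] [NormedSpace ℝ F]
      {f : EuclideanSpace ℝ (Fin d) → F}, ContDiff ℝ (⊤ : ℕ∞) f →
      HasDerivAt (fun t : ℝ => f (x + t • v)) (fderiv ℝ f x v) 0 := fun hf =>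
    (hf.differentiable (by simp)).differentiableAt.hasFDerivAt.hasLineDerivAt v
  have h1 : ContDiff ℝ (⊤ : ℕ∞) (fderiv ℝ g) := (contDiff_infty_iff_fderiv.1 hg).2
  have hAk : ContDiff ℝ (⊤ : ℕ∞) fun y => A y k :=
    (EuclideanSpace.proj (𝕜 := ℝ) k).contDiff.comp hA
  have hD : HasDerivAt (fun t : ℝ => magDeriv A g k (x + t • v)) _ 0 :=
    ((hline h1).clm_apply (hasDerivAt_const 0 (EuclideanSpace.single k (1:ℝ)))).sub
      (((hline hAk).ofReal_comp.const_mul Complex.I).mul (hline hg))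
  have hQ : HasDerivAt (fun t : ℝ => magCurrent A g k (x + t • v)) _ 0 :=
    Complex.imCLM.hasFDerivAt.comp_hasDerivAt (0:ℝ) ((hline hg).star.mul hD)
  rw [(hline (contDiff_magCurrent hA hg k)).unique hQ]
  simp

/-- The curl of the probability current. -/
lemma fderiv_magCurrent_sub (hA : ContDiff ℝ (⊤ : ℕ∞) A) (hg : ContDiff ℝ (⊤ : ℕ∞) g)
    (j k : Fin d) (x : EuclideanSpace ℝ (Fin d)) :
    fderiv ℝ (magCurrent A g k) x (EuclideanSpace.single j (1:ℝ))
      - fderiv ℝ (magCurrent A g j) x (EuclideanSpace.single k (1:ℝ))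
      = 2 * (star (magDeriv A g j x) * magDeriv A g k x).im
        - magTensor A j k x * ‖g x‖ ^ 2 := by
  have hsymm : fderiv ℝ (fderiv ℝ g) x (EuclideanSpace.single j (1:ℝ))
      (EuclideanSpace.single k (1:ℝ)) = fderiv ℝ (fderiv ℝ g) x (EuclideanSpace.single k (1:ℝ))
      (EuclideanSpace.single j (1:ℝ)) :=
    (hg.contDiffAt.isSymmSndFDerivAt (by simpa using ENat.LEInfty.out)) _ _
  rw [fderiv_magCurrent hA hg, fderiv_magCurrent hA hg, hsymm, magTensor, Complex.sq_norm,
    Complex.normSq_apply]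
  simp only [magDeriv, Complex.star_def, Complex.add_im, Complex.sub_im, Complex.sub_re,
    Complex.mul_im, Complex.mul_re, Complex.add_re, Complex.conj_re, Complex.conj_im,
    Complex.I_re, Complex.I_im, Complex.ofReal_re, Complex.ofReal_im]
  ring

lemma integral_mul_magTensor (hA : ContDiff ℝ (⊤ : ℕ∞) A) (hg : ContDiff ℝ (⊤ : ℕ∞) g)
    {η : EuclideanSpace ℝ (Fin d) → ℝ} (hη : ContDiff ℝ (⊤ : ℕ∞) η) (hηc : HasCompactSupport η)
    (j k : Fin d) :
    Integrable (fun x => 2 * η x * (star (magDeriv A g j x) * magDeriv A g k x).im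
      + (fderiv ℝ η x (EuclideanSpace.single j (1:ℝ)) * magCurrent A g k x
        - fderiv ℝ η x (EuclideanSpace.single k (1:ℝ)) * magCurrent A g j x)) ∧
    ∫ x, η x * (magTensor A j k x * ‖g x‖ ^ 2)
      = ∫ x, (2 * η x * (star (magDeriv A g j x) * magDeriv A g k x).im
          + (fderiv ℝ η x (EuclideanSpace.single j (1:ℝ)) * magCurrent A g k x
            - fderiv ℝ η x (EuclideanSpace.single k (1:ℝ)) * magCurrent A g j x)) := by
  have hηd := hη.continuous_fderiv (by simp)
  have hηcont := hη.continuous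
  have hJ := fun k => (contDiff_magCurrent hA hg k).continuous
  have hJd := fun k => (contDiff_magCurrent hA hg k).continuous_fderiv (by simp)
  have hD := continuous_magDeriv hA hg
  have hi1 : ∀ (i l : Fin d), Integrable fun x =>
      fderiv ℝ η x (EuclideanSpace.single i (1:ℝ)) * magCurrent A g l x := fun i l =>
    Continuous.integrable_of_hasCompactSupport (by fun_prop)
      ((hηc.fderiv_apply ℝ _).mul_right)
  have hi2 : ∀ (i l : Fin d), Integrable fun x =>
      η x * fderiv ℝ (magCurrent A g l) x (EuclideanSpace.single i (1:ℝ)) := fun i l =>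
    Continuous.integrable_of_hasCompactSupport (by fun_prop) hηc.mul_right
  have hi3 : Integrable fun x => 2 * η x * (star (magDeriv A g j x) * magDeriv A g k x).im :=
    Continuous.integrable_of_hasCompactSupport
      ((continuous_const.mul hηcont).mul (Complex.continuous_im.comp (by fun_prop)))
      hηc.mul_left.mul_right
  have hibp : ∀ (i l : Fin d),
      ∫ x, η x * fderiv ℝ (magCurrent A g l) x (EuclideanSpace.single i (1:ℝ))
        = - ∫ x, fderiv ℝ η x (EuclideanSpace.single i (1:ℝ)) * magCurrent A g l x := fun i l =>
    integral_mul_fderiv_eq_neg_fderiv_mul_of_integrable (hi1 i l) (hi2 i l)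
      (Continuous.integrable_of_hasCompactSupport (by fun_prop) hηc.mul_right)
      (fun x _ => (hη.differentiable (by simp)).differentiableAt)
      (fun x _ => ((contDiff_magCurrent hA hg l).differentiable (by simp)).differentiableAt)
  have hpt : ∀ x, η x * (magTensor A j k x * ‖g x‖ ^ 2)
      = 2 * η x * (star (magDeriv A g j x) * magDeriv A g k x).im
        - (η x * fderiv ℝ (magCurrent A g k) x (EuclideanSpace.single j (1:ℝ))
          - η x * fderiv ℝ (magCurrent A g j) x (EuclideanSpace.single k (1:ℝ))) := by
    intro x
    linear_combination η x * fderiv_magCurrent_sub hA hg j k x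
  refine ⟨hi3.add ((hi1 j k).sub (hi1 k j)), ?_⟩
  simp_rw [hpt]
  rw [integral_sub hi3 (by exact (hi2 j k).sub (hi2 k j)), integral_sub (hi2 j k) (hi2 k j),
    hibp, hibp, integral_add hi3 (by exact (hi1 j k).sub (hi1 k j)),
    integral_sub (hi1 j k) (hi1 k j)]
  ring

/-- Where a component of the magnetic tensor is positive, the magnetic energy
controls the mass up to an arbitrarily small fraction of the total mass. -/
lemma exists_setIntegral_norm_sq_le_of_magTensor_pos (hA : ContDiff ℝ (⊤ : ℕ∞) A) {j k : Fin d}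
    {x₀ : EuclideanSpace ℝ (Fin d)} {β ρ R : ℝ} (hβ : 0 < β) (hρ : 0 < ρ)
    (hB : ∀ x ∈ Metric.ball x₀ ρ, β ≤ magTensor A j k x)
    (hR : Metric.closedBall x₀ ρ ⊆ Metric.ball 0 R) {δ : ℝ} (hδ : 0 < δ) :
    ∃ C : ℝ, 0 ≤ C ∧ ∀ g : EuclideanSpace ℝ (Fin d) → ℂ, ContDiff ℝ (⊤ : ℕ∞) g →
      ∫ x in Metric.ball x₀ (ρ / 2), ‖g x‖ ^ 2
        ≤ δ * (∫ x in Metric.ball 0 R, ‖g x‖ ^ 2)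
          + C * ∫ x in Metric.ball 0 R, magEnergy d A g x := by
  let η : ContDiffBump x₀ := ⟨ρ / 2, ρ, by positivity, by linarith⟩
  have hη : ContDiff ℝ (⊤ : ℕ∞) η := η.contDiff
  have hηc : HasCompactSupport η := η.hasCompactSupport
  have hη0 : ∀ x ∉ Metric.ball x₀ ρ, η x = 0 := fun x hx =>
    η.zero_of_le_dist (by simpa using hx)
  obtain ⟨M, hM⟩ := (hηc.fderiv ℝ).exists_bound_of_continuous (hη.continuous_fderiv (by simp))
  have hM0 : 0 ≤ M := (norm_nonneg _).trans (hM 0)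
  have hdir : ∀ x i, |fderiv ℝ η x (EuclideanSpace.single i (1:ℝ))| ≤ M := fun x i => by
    refine ((fderiv ℝ η x).le_opNorm _).trans ?_
    simpa using hM x
  refine ⟨(2 + 2 * (M ^ 2 / (β * δ))) / β, by positivity, fun g hg => ?_⟩
  have hE := continuous_magEnergy hA hg
  have hgc := hg.continuous
  have hT := continuous_magTensor hA j k
  have hI1 := integrableOn_ball_of_continuous (f := fun x => ‖g x‖ ^ 2) (by fun_prop) 0 R
  have hI2 := integrableOn_ball_of_continuous hE 0 R
  have hlow : β * ∫ x in Metric.ball x₀ (ρ / 2), ‖g x‖ ^ 2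
      ≤ ∫ x, η x * (magTensor A j k x * ‖g x‖ ^ 2) := by
    rw [← integral_const_mul, ← integral_indicator measurableSet_ball]
    refine integral_mono ?_ ?_ fun x => ?_
    · exact (integrable_indicator_iff measurableSet_ball).2
        (integrableOn_ball_of_continuous (by fun_prop) _ _)
    · have := hη.continuous
      exact Continuous.integrable_of_hasCompactSupport (by fun_prop) hηc.mul_right
    · by_cases hx : x ∈ Metric.ball x₀ (ρ / 2)
      · have h1 : η x = 1 := η.one_of_mem_closedBall (Metric.ball_subset_closedBall hx)
        have h2 := hB x (Metric.ball_subset_ball (by linarith) hx)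
        simp only [Set.indicator_of_mem hx, h1, one_mul]
        gcongr
      · rw [Set.indicator_of_notMem hx]
        by_cases hx' : x ∈ Metric.ball x₀ ρ
        · exact mul_nonneg η.nonneg (mul_nonneg (hβ.le.trans (hB x hx')) (by positivity))
        · simp [hη0 x hx']
  have hup : ∫ x, η x * (magTensor A j k x * ‖g x‖ ^ 2)
      ≤ β * δ * (∫ x in Metric.ball 0 R, ‖g x‖ ^ 2)
        + (2 + 2 * (M ^ 2 / (β * δ))) * ∫ x in Metric.ball 0 R, magEnergy d A g x := by
    obtain ⟨hint_int, heq⟩ := integral_mul_magTensor hA hg hη hηc j k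
    rw [heq, ← integral_const_mul, ← integral_const_mul,
      ← integral_add (hI1.const_mul _) (hI2.const_mul _), ← integral_indicator measurableSet_ball]
    refine integral_mono hint_int ((integrable_indicator_iff measurableSet_ball).2
      ((hI1.const_mul _).add (hI2.const_mul _))) fun x => ?_
    by_cases hx : x ∈ Metric.ball 0 R
    · rw [Set.indicator_of_mem hx]
      have hamgm : ∀ i l, |fderiv ℝ η x (EuclideanSpace.single i (1:ℝ)) * magCurrent A g l x|
          ≤ β * δ / 2 * ‖g x‖ ^ 2 + M ^ 2 / (β * δ) * magEnergy d A g x := by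
        intro i l
        have h1 : |fderiv ℝ η x (EuclideanSpace.single i (1:ℝ)) * magCurrent A g l x|
            ≤ M * (‖g x‖ * ‖magDeriv A g l x‖) := by
          rw [abs_mul]
          exact mul_le_mul (hdir x i) (abs_magCurrent_le l x) (abs_nonneg _) hM0
        have h2 : M * (‖g x‖ * ‖magDeriv A g l x‖)
            ≤ β * δ / 2 * ‖g x‖ ^ 2 + M ^ 2 / (β * δ) / 2 * ‖magDeriv A g l x‖ ^ 2 := by
          have h3 : β * δ / 2 * ‖g x‖ ^ 2 + M ^ 2 / (β * δ) / 2 * ‖magDeriv A g l x‖ ^ 2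
              - M * (‖g x‖ * ‖magDeriv A g l x‖)
              = (β * δ * ‖g x‖ - M * ‖magDeriv A g l x‖) ^ 2 / (2 * (β * δ)) := by
            field_simp
            ring
          have h4 : 0 ≤ (β * δ * ‖g x‖ - M * ‖magDeriv A g l x‖) ^ 2 / (2 * (β * δ)) := by
            positivity
          linarith
        have h5 : M ^ 2 / (β * δ) / 2 * ‖magDeriv A g l x‖ ^ 2
            ≤ M ^ 2 / (β * δ) * magEnergy d A g x :=
          mul_le_mul (half_le_self (by positivity)) (norm_sq_magDeriv_le l x) (by positivity)
            (by positivity)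
        linarith
      have him : 2 * η x * (star (magDeriv A g j x) * magDeriv A g k x).im
          ≤ 2 * magEnergy d A g x := by
        have h1 : (star (magDeriv A g j x) * magDeriv A g k x).im
            ≤ ‖magDeriv A g j x‖ * ‖magDeriv A g k x‖ := by
          refine (le_abs_self _).trans ((Complex.abs_im_le_norm _).trans (le_of_eq ?_))
          rw [norm_mul, norm_star]
        have h2 : η x ≤ 1 := η.le_one
        have h3 : 0 ≤ η x := η.nonneg
        have h4 := norm_sq_magDeriv_le (A := A) (g := g) j x
        have h5 := norm_sq_magDeriv_le (A := A) (g := g) k x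
        have h6 : ‖magDeriv A g j x‖ * ‖magDeriv A g k x‖ ≤ magEnergy d A g x := by
          nlinarith [sq_nonneg (‖magDeriv A g j x‖ - ‖magDeriv A g k x‖)]
        nlinarith [mul_le_mul_of_nonneg_left (h1.trans h6) h3,
          mul_le_mul_of_nonneg_right h2 (magEnergy_nonneg (A := A) (g := g) x)]
      have h1 := le_of_abs_le (hamgm j k)
      have h2 := neg_le_of_abs_le (hamgm k j)
      change _ ≤ β * δ * ‖g x‖ ^ 2 + (2 + 2 * (M ^ 2 / (β * δ))) * magEnergy d A g x
      linarith
    · have hx' : x ∉ tsupport η := fun h => hx (hR (by simpa [η.tsupport_eq] using h))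
      simp [hx, image_eq_zero_of_notMem_tsupport hx', fderiv_of_notMem_tsupport (𝕜 := ℝ) hx']
  rw [div_mul_eq_mul_div, ← sub_le_iff_le_add', le_div_iff₀ hβ]
  linarith

/-- The measure `|x|^{-(d-2)} dx` on the ball of radius `R`. -/
noncomputable def weightedBall (d : ℕ) (R : ℝ) : Measure (EuclideanSpace ℝ (Fin d)) :=
  (volume.restrict (Metric.ball 0 R)).withDensity fun x => ENNReal.ofReal (‖x‖ ^ (-((d:ℝ) - 2)))

lemma lintegral_weightedBall (R : ℝ) {F : EuclideanSpace ℝ (Fin d) → ENNReal} (hF : Measurable F) :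
    ∫⁻ x, F x ∂(weightedBall d R)
      = ∫⁻ x in Metric.ball 0 R, F x * ENNReal.ofReal (‖x‖ ^ (-((d:ℝ) - 2))) := by
  rw [weightedBall, lintegral_withDensity_eq_lintegral_mul _ (by fun_prop) hF]
  simp only [Pi.mul_apply, mul_comm]

lemma lintegral_ofReal_weightedBall (hd : 2 ≤ d) (R : ℝ) {f : EuclideanSpace ℝ (Fin d) → ℝ}
    (hf : Continuous f) (hf0 : ∀ x, 0 ≤ f x) :
    ∫⁻ x, ENNReal.ofReal (f x) ∂(weightedBall d R)
      = ENNReal.ofReal (∫ x in Metric.ball 0 R, f x * ‖x‖ ^ (-((d:ℝ) - 2))) := by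
  rw [lintegral_weightedBall _ (by fun_prop), ofReal_integral_eq_lintegral_ofReal
    (integrableOn_mul_norm_rpow_ball hd R hf)
    (Filter.Eventually.of_forall fun x => mul_nonneg (hf0 x) (by positivity))]
  simp_rw [ENNReal.ofReal_mul (hf0 _)]

lemma lintegral_ofReal_ball {f : EuclideanSpace ℝ (Fin d) → ℝ} (hf : Continuous f)
    (hf0 : ∀ x, 0 ≤ f x) (c : EuclideanSpace ℝ (Fin d)) (R : ℝ) :
    ∫⁻ x in Metric.ball c R, ENNReal.ofReal (f x)
      = ENNReal.ofReal (∫ x in Metric.ball c R, f x) :=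
  (ofReal_integral_eq_lintegral_ofReal (integrableOn_ball_of_continuous hf c R)
    (Filter.Eventually.of_forall hf0)).symm

/-- The weighted mass is controlled by the mass and the weighted magnetic energy. -/
lemma exists_weighted_norm_sq_le (hd : 2 ≤ d) (hA : ContDiff ℝ (⊤ : ℕ∞) A) {R : ℝ} (hR : 0 < R) :
    ∃ C : ℝ, 0 ≤ C ∧ ∀ g : EuclideanSpace ℝ (Fin d) → ℂ, ContDiff ℝ (⊤ : ℕ∞) g →
      ∫ x in Metric.ball 0 R, ‖g x‖ ^ 2 * ‖x‖ ^ (-((d:ℝ) - 2))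
        ≤ C * ((∫ x in Metric.ball 0 R, ‖g x‖ ^ 2)
          + ∫ x in Metric.ball 0 R, magEnergy d A g x * ‖x‖ ^ (-((d:ℝ) - 2))) := by
  refine ⟨4 * (R / 2) ^ (-((d:ℝ) - 2)) + 12 * (R / 2) ^ 2, by positivity, fun g hg => ?_⟩
  have hgc := hg.continuous
  have hE := continuous_magEnergy hA hg
  have hg2 : Continuous fun x => ‖g x‖ ^ 2 := by fun_prop
  have hI := fun r => integrableOn_mul_norm_rpow_ball hd r hg2
  have hN0 : 0 ≤ ∫ x in Metric.ball 0 R, ‖g x‖ ^ 2 := integral_nonneg fun x => by positivity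
  have hE0 : 0 ≤ ∫ x in Metric.ball 0 R, magEnergy d A g x * ‖x‖ ^ (-((d:ℝ) - 2)) :=
    integral_nonneg fun x => mul_nonneg (magEnergy_nonneg x) (by positivity)
  have hI0 : 0 ≤ ∫ x in Metric.ball 0 R, ‖g x‖ ^ 2 * ‖x‖ ^ (-((d:ℝ) - 2)) :=
    integral_nonneg fun x => by positivity
  have : SFinite (weightedBall d (R / 2)) := by unfold weightedBall; infer_instance
  have hin : ∫ x in Metric.ball 0 (R / 2), ‖g x‖ ^ 2 * ‖x‖ ^ (-((d:ℝ) - 2))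
      ≤ 3 * (4⁻¹ * ∫ x in Metric.ball 0 R, ‖g x‖ ^ 2 * ‖x‖ ^ (-((d:ℝ) - 2)))
        + 3 * (R / 2) ^ 2
          * ∫ x in Metric.ball 0 R, magEnergy d A g x * ‖x‖ ^ (-((d:ℝ) - 2)) := by
    have h := lintegral_norm_sq_le_of_homothety hA hg (ν := weightedBall d (R / 2))
      (ν' := weightedBall d R) 0 1 ((R / 2) ^ 2) 1 (by
        refine (withDensity_absolutelyContinuous _ _).ae_le ?_
        filter_upwards [ae_restrict_mem measurableSet_ball] with x hx
        rw [mem_ball_zero_iff] at hx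
        rw [one_smul, sub_zero]
        gcongr) (by
        intro t ht F hF
        have h1 := setLIntegral_comp_smul_weight_le (d := d) (s := 1 + t) (r := R / 2) (R := R)
          (by linarith [ht.1]) (by nlinarith [ht.2]) hF
        have h2 : ∀ x : EuclideanSpace ℝ (Fin d), x + t • (1:ℝ) • (x - 0) = (1 + t) • x := by
          intro x
          rw [one_smul, sub_zero, add_smul, one_smul]
        simp_rw [h2]
        rw [lintegral_weightedBall _ (by fun_prop),
          lintegral_weightedBall _ hF]
        refine h1.trans (mul_le_mul_left ?_ _)
        rw [← ENNReal.ofReal_one]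
        exact ENNReal.ofReal_le_ofReal (inv_le_one_of_one_le₀ (by nlinarith [ht.1])))
    have hend : ∫⁻ x, ENNReal.ofReal (‖g (x + (1:ℝ) • (x - 0))‖ ^ 2) ∂(weightedBall d (R / 2))
        ≤ ENNReal.ofReal
          (4⁻¹ * ∫ x in Metric.ball 0 R, ‖g x‖ ^ 2 * ‖x‖ ^ (-((d:ℝ) - 2))) := by
      have h1 := setLIntegral_comp_smul_weight_le (d := d) (s := 2) (r := R / 2) (R := R)
        (by norm_num) (by linarith) (F := fun x => ENNReal.ofReal (‖g x‖ ^ 2)) (by fun_prop)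
      have h2 : ∀ x : EuclideanSpace ℝ (Fin d), x + (1:ℝ) • (x - 0) = (2:ℝ) • x := by
        intro x
        rw [one_smul, sub_zero, two_smul]
      simp_rw [h2]
      rw [lintegral_weightedBall _ (by fun_prop)]
      refine h1.trans (le_of_eq ?_)
      rw [← lintegral_weightedBall _ (by fun_prop),
        lintegral_ofReal_weightedBall hd R hg2 (fun x => by positivity),
        ← ENNReal.ofReal_mul (by positivity)]
      norm_num
    rw [lintegral_ofReal_weightedBall hd _ hg2 (fun x => by positivity),
      lintegral_ofReal_weightedBall hd _ hE (fun x => magEnergy_nonneg x), mul_one,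
      ← ENNReal.ofReal_mul (by positivity)] at h
    replace h := h.trans (add_le_add_left (mul_le_mul_right hend 3) _)
    rw [show (3 : ENNReal) = ENNReal.ofReal 3 by simp, ← ENNReal.ofReal_mul (by positivity),
      ← ENNReal.ofReal_add (by positivity) (by positivity)] at h
    exact (ENNReal.ofReal_le_ofReal_iff (by positivity)).1 h
  have hout : ∫ x in Metric.ball 0 R, ‖g x‖ ^ 2 * ‖x‖ ^ (-((d:ℝ) - 2))
      ≤ (∫ x in Metric.ball 0 (R / 2), ‖g x‖ ^ 2 * ‖x‖ ^ (-((d:ℝ) - 2)))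
        + (R / 2) ^ (-((d:ℝ) - 2)) * ∫ x in Metric.ball 0 R, ‖g x‖ ^ 2 := by
    have hsub : Metric.ball (0 : EuclideanSpace ℝ (Fin d)) (R / 2) ⊆ Metric.ball 0 R :=
      Metric.ball_subset_ball (by linarith)
    have hd2 : (2:ℝ) ≤ d := by exact_mod_cast hd
    rw [← integral_const_mul, ← integral_indicator measurableSet_ball,
      ← integral_indicator measurableSet_ball, ← integral_indicator measurableSet_ball,
      ← integral_add ((integrable_indicator_iff measurableSet_ball).2 (hI _))
        ((integrable_indicator_iff measurableSet_ball).2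
          ((integrableOn_ball_of_continuous hg2 0 R).const_mul _))]
    refine integral_mono ((integrable_indicator_iff measurableSet_ball).2 (hI _))
      (((integrable_indicator_iff measurableSet_ball).2 (hI _)).add
        ((integrable_indicator_iff measurableSet_ball).2
          ((integrableOn_ball_of_continuous hg2 0 R).const_mul _))) fun x => ?_
    by_cases hx : x ∈ Metric.ball 0 (R / 2)
    · simp only [Set.indicator_of_mem hx, Set.indicator_of_mem (hsub hx)]
      exact le_add_of_nonneg_right (by positivity)
    · by_cases hx' : x ∈ Metric.ball 0 R
      · simp only [Set.indicator_of_mem hx', Set.indicator_of_notMem hx, zero_add]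
        rw [mul_comm]
        have hx2 : R / 2 ≤ ‖x‖ := by simpa using hx
        exact mul_le_mul_of_nonneg_right (Real.rpow_le_rpow_of_nonpos (by positivity) hx2
          (by linarith)) (by positivity)
      · simp [hx, hx']
  have hw0 : 0 ≤ (R / 2) ^ (-((d:ℝ) - 2)) := by positivity
  nlinarith [mul_nonneg hw0 hE0, mul_nonneg (sq_nonneg (R / 2)) hN0]

/-- The mass on a ball is controlled by the mass near an interior point and the magnetic energy. -/
lemma exists_norm_sq_le_of_mem_ball (hA : ContDiff ℝ (⊤ : ℕ∞) A) {R r : ℝ} (hr : 0 < r)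
    {x₀ : EuclideanSpace ℝ (Fin d)} (hx₀ : x₀ ∈ Metric.ball 0 R) :
    ∃ C : ℝ, 0 < C ∧ ∀ g : EuclideanSpace ℝ (Fin d) → ℂ, ContDiff ℝ (⊤ : ℕ∞) g →
      ∫ x in Metric.ball 0 R, ‖g x‖ ^ 2
        ≤ C * ((∫ x in Metric.ball x₀ r, ‖g x‖ ^ 2)
          + ∫ x in Metric.ball 0 R, magEnergy d A g x) := by
  have hR : 0 < R := Metric.pos_of_mem_ball hx₀
  obtain ⟨s, hs0, hs1, hsr⟩ : ∃ s : ℝ, 0 < s ∧ s ≤ 1 ∧ s * (2 * R) ≤ r :=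
    ⟨min 1 (r / (2 * R)), by positivity, min_le_left _ _, by
      calc _ ≤ r / (2 * R) * (2 * R) := by gcongr; exact min_le_right _ _
        _ = r := by field_simp⟩
  have hdist : ∀ x ∈ Metric.ball (0 : EuclideanSpace ℝ (Fin d)) R, ‖x - x₀‖ < 2 * R := by
    intro x hx
    rw [mem_ball_zero_iff] at hx hx₀
    linarith [norm_sub_le x x₀]
  refine ⟨3 * (s ^ d)⁻¹ + 3 * (2 * R) ^ 2 * (s ^ d)⁻¹, by positivity, fun g hg => ?_⟩
  have hgc := hg.continuous
  have hE := continuous_magEnergy hA hg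
  have hg2 : Continuous fun x => ‖g x‖ ^ 2 := by fun_prop
  have hN0 : 0 ≤ ∫ x in Metric.ball x₀ r, ‖g x‖ ^ 2 := integral_nonneg fun x => by positivity
  have hE0 : 0 ≤ ∫ x in Metric.ball 0 R, magEnergy d A g x :=
    integral_nonneg fun x => magEnergy_nonneg x
  have hpath : ∀ (t : ℝ) (x : EuclideanSpace ℝ (Fin d)),
      x + t • (s - 1) • (x - x₀) = x₀ + (1 + t * (s - 1)) • (x - x₀) := by
    intro t x
    module
  have h := lintegral_norm_sq_le_of_homothety hA hg (ν := volume.restrict (Metric.ball 0 R))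
    (ν' := volume.restrict (Metric.ball 0 R)) x₀ (s - 1) ((2 * R) ^ 2)
    (ENNReal.ofReal (s ^ d)⁻¹) (by
      filter_upwards [ae_restrict_mem measurableSet_ball] with x hx
      rw [norm_smul]
      have h1 : ‖s - 1‖ ≤ 1 := abs_le.2 ⟨by linarith, by linarith⟩
      have h2 : ‖s - 1‖ * ‖x - x₀‖ ≤ 1 * (2 * R) := by
        gcongr
        exact (hdist x hx).le
      rw [one_mul] at h2
      gcongr) (by
      intro t ht F hF
      have hst : s ≤ 1 + t * (s - 1) := by nlinarith [ht.2]
      have hst1 : 1 + t * (s - 1) ≤ 1 := by nlinarith [ht.1]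
      simp_rw [hpath]
      refine (setLIntegral_comp_homothety_le (hs0.trans_le hst) x₀ measurableSet_ball
        measurableSet_ball (S' := Metric.ball 0 R) (fun x hx => ?_) hF).trans ?_
      · exact (convex_ball 0 R).add_smul_sub_mem hx₀ hx ⟨(hs0.trans_le hst).le, hst1⟩
      · gcongr)
  have hend : ∫⁻ x in Metric.ball 0 R, ENNReal.ofReal (‖g (x + (s - 1) • (x - x₀))‖ ^ 2)
      ≤ ENNReal.ofReal ((s ^ d)⁻¹ * ∫ x in Metric.ball x₀ r, ‖g x‖ ^ 2) := by
    rw [ENNReal.ofReal_mul (by positivity), ← lintegral_ofReal_ball hg2 (fun x => by positivity)]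
    have h2 : ∀ x : EuclideanSpace ℝ (Fin d), x + (s - 1) • (x - x₀) = x₀ + s • (x - x₀) := by
      intro x
      module
    simp_rw [h2]
    refine setLIntegral_comp_homothety_le hs0 x₀ measurableSet_ball measurableSet_ball
      (fun x hx => ?_) (F := fun x => ENNReal.ofReal (‖g x‖ ^ 2)) (by fun_prop)
    rw [mem_ball_iff_norm, add_sub_cancel_left, norm_smul, Real.norm_of_nonneg hs0.le]
    exact (mul_lt_mul_of_pos_left (hdist x hx) hs0).trans_le hsr
  rw [lintegral_ofReal_ball hg2 (fun x => by positivity),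
    lintegral_ofReal_ball hE (fun x => magEnergy_nonneg x),
    ← ENNReal.ofReal_mul (by positivity), ← ENNReal.ofReal_mul (by positivity)] at h
  replace h := h.trans (add_le_add_left (mul_le_mul_right hend 3) _)
  rw [show (3 : ENNReal) = ENNReal.ofReal 3 by simp, ← ENNReal.ofReal_mul (by positivity),
    ← ENNReal.ofReal_add (by positivity) (by positivity)] at h
  replace h := (ENNReal.ofReal_le_ofReal_iff (by positivity)).1 h
  have hs' : 0 ≤ (s ^ d)⁻¹ := by positivity
  nlinarith [mul_nonneg hs' hE0, mul_nonneg (mul_nonneg (sq_nonneg (2 * R)) hs') hN0]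

lemma exists_setIntegral_le_weighted (hd : 2 ≤ d) {R : ℝ} (hR : 0 < R) :
    ∃ C : ℝ, 0 < C ∧ ∀ f : EuclideanSpace ℝ (Fin d) → ℝ, Continuous f → (∀ x, 0 ≤ f x) →
      ∫ x in Metric.ball 0 R, f x
        ≤ C * ∫ x in Metric.ball 0 R, f x * ‖x‖ ^ (-((d:ℝ) - 2)) := by
  have : Nonempty (Fin d) := ⟨⟨0, by omega⟩⟩
  have hd2 : (2:ℝ) ≤ d := by exact_mod_cast hd
  refine ⟨R ^ ((d:ℝ) - 2), by positivity, fun f hf hf0 => ?_⟩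
  rw [← integral_const_mul]
  refine integral_mono_ae (integrableOn_ball_of_continuous hf 0 R)
    ((integrableOn_mul_norm_rpow_ball hd R hf).const_mul _) ?_
  filter_upwards [ae_restrict_mem measurableSet_ball,
    ae_restrict_of_ae (Measure.ae_ne volume (0 : EuclideanSpace ℝ (Fin d)))] with x hx hx0
  rw [mem_ball_zero_iff] at hx
  have h1 : R ^ (-((d:ℝ) - 2)) ≤ ‖x‖ ^ (-((d:ℝ) - 2)) :=
    Real.rpow_le_rpow_of_nonpos (norm_pos_iff.2 hx0) hx.le (by linarith)
  calc f x = R ^ ((d:ℝ) - 2) * (f x * R ^ (-((d:ℝ) - 2))) := by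
        rw [mul_left_comm, ← Real.rpow_add hR]
        simp
    _ ≤ _ := by
        have := hf0 x
        gcongr

/-- A nonzero smooth function has positive weighted mass. -/
lemma weighted_norm_sq_pos (hd : 2 ≤ d) (hg : ContDiff ℝ (⊤ : ℕ∞) g) {R : ℝ}
    (hne : ∃ x ∈ Metric.ball (0 : EuclideanSpace ℝ (Fin d)) R, g x ≠ 0) :
    0 < ∫ x in Metric.ball 0 R, ‖g x‖ ^ 2 * ‖x‖ ^ (-((d:ℝ) - 2)) := by
  have hgc := hg.continuous
  have : Nonempty (Fin d) := ⟨⟨0, by omega⟩⟩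
  refine lt_of_le_of_ne (integral_nonneg fun x => by positivity) fun h0 => ?_
  rw [eq_comm, integral_eq_zero_iff_of_nonneg (fun x => by positivity)
    (integrableOn_mul_norm_rpow_ball hd R (by fun_prop))] at h0
  have hae : g =ᵐ[volume.restrict (Metric.ball 0 R)] fun _ => 0 := by
    filter_upwards [h0, ae_restrict_of_ae
      (Measure.ae_ne volume (0 : EuclideanSpace ℝ (Fin d)))] with x hx hx0
    have h1 : 0 < ‖x‖ ^ (-((d:ℝ) - 2)) := Real.rpow_pos_of_pos (norm_pos_iff.2 hx0) _
    simpa using (mul_eq_zero.1 hx).resolve_right h1.ne'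
  obtain ⟨x, hx, hgx⟩ := hne
  exact hgx (Measure.eqOn_open_of_ae_eq hae Metric.isOpen_ball hgc.continuousOn
    continuousOn_const hx)

/-- A nonvanishing magnetic field yields a spectral gap on a large enough ball. -/
lemma exists_weighted_norm_sq_le_magEnergy (hd : 2 ≤ d) (hA : ContDiff ℝ (⊤ : ℕ∞) A)
    {x₀ : EuclideanSpace ℝ (Fin d)} {j k : Fin d} (hB : 0 < magTensor A j k x₀) :
    ∃ R > 0, ∃ C : ℝ, 0 < C ∧ ∀ g : EuclideanSpace ℝ (Fin d) → ℂ, ContDiff ℝ (⊤ : ℕ∞) g →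
      ∫ x in Metric.ball 0 R, ‖g x‖ ^ 2 * ‖x‖ ^ (-((d:ℝ) - 2))
        ≤ C * ∫ x in Metric.ball 0 R, magEnergy d A g x * ‖x‖ ^ (-((d:ℝ) - 2)) := by
  obtain ⟨ρ, hρ, hρB⟩ := Metric.eventually_nhds_iff_ball.1
    ((continuous_magTensor hA j k).continuousAt.eventually_const_le (half_lt_self hB))
  have hR : 0 < ‖x₀‖ + ρ + 1 := by positivity
  have hsub : Metric.closedBall x₀ ρ ⊆ Metric.ball 0 (‖x₀‖ + ρ + 1) :=
    fun x hx => by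
      rw [mem_closedBall_iff_norm] at hx
      rw [mem_ball_zero_iff]
      linarith [norm_le_norm_add_norm_sub' x x₀]
  obtain ⟨C₁, hC₁, h₁⟩ := exists_weighted_norm_sq_le hd hA hR
  obtain ⟨C₂, hC₂, h₂⟩ := exists_norm_sq_le_of_mem_ball hA (half_pos hρ)
    (hsub (Metric.mem_closedBall_self hρ.le))
  obtain ⟨C₃, hC₃, h₃⟩ := exists_setIntegral_norm_sq_le_of_magTensor_pos hA (half_pos hB) hρ hρB
    hsub (δ := 1 / (2 * C₂)) (by positivity)
  obtain ⟨C₄, hC₄, h₄⟩ := exists_setIntegral_le_weighted hd hR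
  refine ⟨_, hR, C₁ * (2 * (C₂ * (C₃ + 1) * C₄) + 1) + 1, by positivity, fun g hg => ?_⟩
  have i₁ := h₁ g hg
  have i₂ := h₂ g hg
  have i₃ := h₃ g hg
  have i₄ := h₄ _ (continuous_magEnergy hA hg) magEnergy_nonneg
  have hE0 : 0 ≤ ∫ x in Metric.ball 0 (‖x₀‖ + ρ + 1),
      magEnergy d A g x * ‖x‖ ^ (-((d:ℝ) - 2)) :=
    integral_nonneg fun x => mul_nonneg (magEnergy_nonneg x) (by positivity)
  generalize (∫ x in Metric.ball 0 (‖x₀‖ + ρ + 1),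
    magEnergy d A g x * ‖x‖ ^ (-((d:ℝ) - 2))) = Ew at *
  generalize (∫ x in Metric.ball 0 (‖x₀‖ + ρ + 1), magEnergy d A g x) = E at *
  generalize (∫ x in Metric.ball 0 (‖x₀‖ + ρ + 1), ‖g x‖ ^ 2) = N at *
  have hN : N ≤ 2 * (C₂ * (C₃ + 1) * C₄) * Ew := by
    have a₁ := mul_le_mul_of_nonneg_left i₃ hC₂.le
    have a₂ : C₂ * (1 / (2 * C₂) * N + C₃ * E) = N / 2 + C₂ * C₃ * E := by
      field_simp
    have a₃ := mul_le_mul_of_nonneg_left i₄ (by positivity : 0 ≤ C₂ * (C₃ + 1))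
    linarith
  have := mul_le_mul_of_nonneg_left (add_le_add_left hN Ew) hC₁
  linarith

lemma muB_pos_of_weighted_norm_sq_le (hd : 2 ≤ d) {R C : ℝ} (hR : 0 < R) (hC : 0 < C)
    (h : ∀ g : EuclideanSpace ℝ (Fin d) → ℂ, ContDiff ℝ (⊤ : ℕ∞) g →
      ∫ x in Metric.ball 0 R, ‖g x‖ ^ 2 * ‖x‖ ^ (-((d:ℝ) - 2))
        ≤ C * ∫ x in Metric.ball 0 R, magEnergy d A g x * ‖x‖ ^ (-((d:ℝ) - 2))) :
    0 < muB d A R := by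
  refine lt_of_lt_of_le (inv_pos.2 hC) (le_csInf
    ⟨_, fun _ => 1, contDiff_const, ⟨0, Metric.mem_ball_self hR, one_ne_zero⟩, rfl⟩ ?_)
  rintro q ⟨g, hg, hne, rfl⟩
  rw [le_div_iff₀ (weighted_norm_sq_pos hd hg hne), inv_mul_le_iff₀ hC]
  exact h g hg

lemma muB_eq_zero_of_magTensor_eq_zero (hA : ContDiff ℝ (⊤ : ℕ∞) A)
    (hB : ∀ x j k, magTensor A j k x = 0) {R : ℝ} (hR : 0 < R) : muB d A R = 0 := by
  obtain ⟨g, hg, hne, hg0⟩ := exists_ne_zero_magEnergy_eq_zero hA hB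
  refine IsLeast.csInf_eq ⟨⟨g, hg, ⟨0, Metric.mem_ball_self hR, hne 0⟩, by simp [hg0]⟩, ?_⟩
  rintro q ⟨g, -, -, rfl⟩
  exact div_nonneg (integral_nonneg fun x => mul_nonneg (magEnergy_nonneg x) (by positivity))
    (integral_nonneg fun x => by positivity)

end
theorem stmt11 (d : ℕ) (hd : 2 ≤ d)
    (A : EuclideanSpace ℝ (Fin d) → EuclideanSpace ℝ (Fin d)) (hA : ContDiff ℝ (⊤ : ℕ∞) A) :
    (∀ R > (0:ℝ), muB d A R = 0) ↔
    (∀ (x : EuclideanSpace ℝ (Fin d)) (j k : Fin d),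
      fderiv ℝ (fun y => A y k) x (EuclideanSpace.single j (1:ℝ))
      - fderiv ℝ (fun y => A y j) x (EuclideanSpace.single k (1:ℝ)) = 0) := by
  refine ⟨fun h => ?_, fun hB R hR => muB_eq_zero_of_magTensor_eq_zero hA hB hR⟩
  have hle : ∀ x j k, magTensor A j k x ≤ 0 := by
    intro x j k
    by_contra! hpos
    obtain ⟨R, hR, C, hC, hgap⟩ := exists_weighted_norm_sq_le_magEnergy hd hA hpos
    exact (muB_pos_of_weighted_norm_sq_le hd hR hC hgap).ne' (h R hR)
  intro x j k
  have h1 := hle x j k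
  have h2 := hle x k j
  simp only [magTensor] at h1 h2
  linarith
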